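/- For every nominal Perm-set X, there is an isomorphism of nominal Sb-sets F(X^(∗)) ≅ (F X)^∗, where X^(∗) is the Perm-set of separated words over X and (F X)^∗ is the Sb-set of all finite words over F(X) with letterwise action. -/

import Mathlib

/-!
The isomorphism sends `[m, x₁ ⋯ xₙ]` to `[m, x₁] ⋯ [m, xₙ]`. It is well defined because a support
of a word supports each of its letters.

*Surjectivity.* In `[m₁, x₁] ⋯ [mₙ, xₙ]` each letter may be renamed,
`[mᵢ, xᵢ] = [mᵢ gᵢ⁻¹, gᵢ xᵢ]`, so that the `gᵢ xᵢ` have pairwise disjoint supports; a single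
substitution then agrees with every `mᵢ gᵢ⁻¹` on the corresponding support
(`exists_sepWord`, by induction on the word).

*Injectivity.* Every element `x` of a nominal set has a least finite support `supp x`
(`Supports.inter`, `exists_least_support`), and `[m, x] = [m', x']` holds exactly if some
permutation `g` has `g x = x'` and `m = m' g` on `supp x` (`FElt_eq_iff`). If two separated words
have the same image, the permutations obtained for the individual letters are glued to one
permutation `g`: the supports of the letters are pairwise disjoint on both sides, so the glued
partial map is injective on a finite set and extends to a finite permutation (`exists_perm_extend`,
`exists_common_perm`).
-/


/-- The monoid of finitely-supported substitutions of atoms (`𝔸 = ℕ`). -/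
def Sb : Submonoid (Function.End ℕ) where
  carrier := {m | {a | m a ≠ a}.Finite}
  one_mem' := by
    have h : {a : ℕ | (1 : Function.End ℕ) a ≠ a} = ∅ := by
      ext a
      simp only [Set.mem_setOf_eq, Set.mem_empty_iff_false, iff_false, not_not]
      rfl
    simp [Set.mem_setOf_eq, h]
  mul_mem' := by
    intro m n hm hn
    refine Set.Finite.subset (Set.Finite.union hm hn) ?_
    intro a ha
    simp only [Set.mem_setOf_eq, Set.mem_union]
    by_contra hcon
    push_neg at hcon
    apply ha
    show m (n a) = a
    rw [hcon.2, hcon.1]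

/-- The group (here: submonoid) of finitely-supported permutations of atoms. -/
def Pm : Submonoid (Function.End ℕ) where
  carrier := {m | {a | m a ≠ a}.Finite ∧ Function.Bijective m}
  one_mem' := ⟨Sb.one_mem, Function.bijective_id⟩
  mul_mem' := by
    intro m n hm hn
    exact ⟨Sb.mul_mem hm.1 hn.1, Function.Bijective.comp hm.2 hn.2⟩

theorem Pm_le_Sb : Pm ≤ Sb := fun _ hm => hm.1

/-- The inclusion of the permutations into the substitutions. -/
def incl : Pm →* Sb := Submonoid.inclusion Pm_le_Sb

/-- `C` is an `M`-support of `x`. -/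
def Supports (M : Submonoid (Function.End ℕ)) {X : Type*} [MulAction M X]
    (C : Set ℕ) (x : X) : Prop :=
  ∀ m₁ m₂ : M, (∀ a ∈ C, m₁.1 a = m₂.1 a) → m₁ • x = m₂ • x

/-- `X` is a nominal `M`-set: every element has a finite `M`-support. -/
def IsNominal (M : Submonoid (Function.End ℕ)) (X : Type*) [MulAction M X] : Prop :=
  ∀ x : X, ∃ C : Set ℕ, C.Finite ∧ Supports M C x

/-- The `Perm`-action on an `Sb`-set, obtained by restriction. -/
instance (priority := 100) permActionOfSb {X : Type*} [MulAction Sb X] : MulAction Pm X :=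
  MulAction.compHom X incl

/-- The generating relation for the quotient defining `F(X)`. -/
inductive FGen (X : Type*) [MulAction Pm X] : Sb × X → Sb × X → Prop
  | act (m : Sb) (g : Pm) (x : X) : FGen X (m, g • x) (m * incl g, x)
  | supp (m m' : Sb) (x : X) (C : Set ℕ) (hC : C.Finite) (hs : Supports Pm C x)
      (h : ∀ a ∈ C, m.1 a = m'.1 a) : FGen X (m, x) (m', x)

/-- The free nominal `Sb`-set over a nominal `Perm`-set: `F(X) = (Sb × X)/∼`. -/
def FObj (X : Type*) [MulAction Pm X] : Type _ := Quot (FGen X)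

/-- The equivalence class `[m, x]`. -/
def FElt {X : Type*} [MulAction Pm X] (m : Sb) (x : X) : FObj X :=
  Quot.mk (FGen X) (m, x)

/-- The `Sb`-action on `F(X)`: `n • [m, x] = [n * m, x]`. -/
instance FObj.instMulAction (X : Type*) [MulAction Pm X] : MulAction Sb (FObj X) where
  smul n := Quot.lift (fun p => FElt (n * p.1) p.2) (by
    intro p q h
    cases h with
    | act m g x =>
        show FElt (n * m) (g • x) = FElt (n * (m * incl g)) x
        rw [← mul_assoc]
        exact Quot.sound (FGen.act (n * m) g x)
    | supp m m' x C hC hs hag =>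
        show FElt (n * m) x = FElt (n * m') x
        exact Quot.sound (FGen.supp (n * m) (n * m') x C hC hs (fun a ha => by
          show n.1 (m.1 a) = n.1 (m'.1 a)
          rw [hag a ha])))
  one_smul := by
    intro p
    induction p using Quot.ind with
    | _ p => show FElt (1 * p.1) p.2 = FElt p.1 p.2; rw [one_mul]
  mul_smul := by
    intro n n' p
    induction p using Quot.ind with
    | _ p =>
      show FElt (n * n' * p.1) p.2 = FElt (n * (n' * p.1)) p.2
      rw [mul_assoc]

theorem FObj.smul_def {X : Type*} [MulAction Pm X] (n m : Sb) (x : X) :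
    n • (FElt m x) = FElt (n * m) x := rfl
theorem Supports.perm_smul {X : Type*} [MulAction Pm X] {C : Set ℕ} {x : X}
    (h : Supports Pm C x) (g : Pm) : Supports Pm (g.1 '' C) (g • x) := by
  intro m₁ m₂ hag
  have h' : (m₁ * g) • x = (m₂ * g) • x :=
    h (m₁ * g) (m₂ * g) (fun a ha => hag (g.1 a) ⟨a, ha, rfl⟩)
  simpa [mul_smul] using h'

/-- Two elements (of possibly different nominal `Perm`-sets) are separated if they
have disjoint finite supports. -/
def Separated {X Y : Type*} [MulAction Pm X] [MulAction Pm Y] (x : X) (y : Y) : Prop :=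
  ∃ C D : Set ℕ, C.Finite ∧ D.Finite ∧ Supports Pm C x ∧ Supports Pm D y ∧ Disjoint C D

theorem Separated.perm_smul {X Y : Type*} [MulAction Pm X] [MulAction Pm Y]
    {x : X} {y : Y} (h : Separated x y) (g : Pm) : Separated (g • x) (g • y) := by
  obtain ⟨C, D, hC, hD, hsx, hsy, hdis⟩ := h
  exact ⟨g.1 '' C, g.1 '' D, hC.image _, hD.image _, hsx.perm_smul g, hsy.perm_smul g,
    (Set.disjoint_image_iff g.2.2.injective).2 hdis⟩

/-- The separated product `X ∗ Y`. -/
def SepProd (X Y : Type*) [MulAction Pm X] [MulAction Pm Y] : Type _ :=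
  {p : X × Y // Separated p.1 p.2}

instance SepProd.instMulAction (X Y : Type*) [MulAction Pm X] [MulAction Pm Y] :
    MulAction Pm (SepProd X Y) where
  smul g p := ⟨g • p.1, by
    have := p.2.perm_smul g
    exact this⟩
  one_smul p := Subtype.ext (one_smul _ _)
  mul_smul g h p := Subtype.ext (mul_smul g h p.1)

/-- The letterwise action on words. -/
instance List.instMulActionOfSubstitutions {M : Submonoid (Function.End ℕ)} {X : Type*}
    [MulAction M X] : MulAction M (List X) where
  smul m l := l.map (m • ·)
  one_smul l := by
    show l.map _ = l
    simp
  mul_smul m n l := by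
    show l.map _ = (l.map _).map _
    simp [mul_smul]

theorem List.smul_def {M : Submonoid (Function.End ℕ)} {X : Type*} [MulAction M X]
    (m : M) (l : List X) : m • l = l.map (m • ·) := rfl

/-- Separated words over `X`: words whose letters are pairwise separated. -/
def SepW (X : Type*) [MulAction Pm X] : Type _ := {l : List X // l.Pairwise Separated}

instance SepW.instMulAction (X : Type*) [MulAction Pm X] : MulAction Pm (SepW X) where
  smul g l := ⟨g • l.1, by
    rw [List.smul_def]
    exact List.Pairwise.map _ (fun {x y} h => h.perm_smul g) l.2⟩
  one_smul l := Subtype.ext (one_smul _ _)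
  mul_smul g h l := Subtype.ext (mul_smul g h l.1)
/-- `M`-equivariance of a function between `M`-sets. -/
def Equivariant (M : Submonoid (Function.End ℕ)) {X Y : Type*} [MulAction M X]
    [MulAction M Y] (f : X → Y) : Prop :=
  ∀ (m : M) (x : X), f (m • x) = m • f x

/-! ### Finite permutations and substitutions -/

/-- An injection defined on a finite set of atoms extends to a finite permutation. -/
theorem exists_perm_extend {A : Set ℕ} (hA : A.Finite) {f : ℕ → ℕ} (hf : Set.InjOn f A) :
    ∃ g : Pm, ∀ a ∈ A, g.1 a = f a := by
  classical
  let T : Finset ℕ := hA.toFinset ∪ hA.toFinset.image f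
  obtain ⟨e, he⟩ := Set.MapsTo.exists_equiv_extend_of_card_eq (α := T) (t := T)
    (s := {t | (t : ℕ) ∈ A}) (f := fun t => f t) (by simp)
    (by
      intro t ht
      have : f t ∈ hA.toFinset.image f := Finset.mem_image_of_mem f (by simpa using ht)
      exact Finset.mem_coe.2 (Finset.mem_union_right _ this))
    (by
      intro s hs t ht hst
      exact Subtype.ext (hf hs ht hst))
  let p : Equiv.Perm ℕ := Equiv.Perm.ofSubtype (p := fun a => a ∈ T) e
  refine ⟨⟨fun a => p a, ?_, p.bijective⟩, ?_⟩
  · refine T.finite_toSet.subset ?_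
    intro a ha
    by_contra hn
    exact ha (Equiv.Perm.ofSubtype_apply_of_not_mem e hn)
  · intro a ha
    have haT : a ∈ T := Finset.mem_union_left _ (by simpa using ha)
    have h1 : p a = e ⟨a, haT⟩ := Equiv.Perm.ofSubtype_apply_of_mem e haT
    exact h1.trans (he ⟨a, haT⟩ ha)

theorem exists_perm_inv (g : Pm) : ∃ h : Pm, h * g = 1 ∧ g * h = 1 := by
  let p : Equiv.Perm ℕ := Equiv.ofBijective g.1 g.2.2
  have hl : ∀ a, p.symm (g.1 a) = a := fun a => p.symm_apply_apply a
  have hr : ∀ a, g.1 (p.symm a) = a := fun a => p.apply_symm_apply a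
  refine ⟨⟨fun a => p.symm a, ?_, p.symm.bijective⟩, Subtype.ext (funext hl), Subtype.ext (funext hr)⟩
  refine g.2.1.subset ?_
  intro a ha hga
  apply ha
  have := hl a
  rwa [hga] at this

/-- Renaming into fresh atoms: the part of the finite set `A` outside `K` is moved off `B`, while
the rest of `A` stays fixed. -/
theorem exists_perm_fresh {A B : Set ℕ} (K : Set ℕ) (hA : A.Finite) (hB : B.Finite) :
    ∃ g : Pm, (∀ a ∈ A, a ∈ K → g.1 a = a) ∧ ∀ a ∈ A, a ∉ K → g.1 a ∉ B := by
  classical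
  obtain ⟨N, hN⟩ := (hA.union hB).bddAbove
  obtain ⟨g, hg⟩ := exists_perm_extend hA (f := fun a => if a ∈ K then a else a + (N + 1)) (by
    intro a ha b hb hab
    have h1 := hN (Or.inl ha)
    have h2 := hN (Or.inl hb)
    simp only at hab
    split_ifs at hab <;> omega)
  refine ⟨g, fun a ha hK => by rw [hg a ha, if_pos hK], fun a ha hK hmem => ?_⟩
  rw [hg a ha, if_neg hK] at hmem
  have := hN (Or.inr hmem)
  omega

/-- Two substitutions can be glued along disjoint finite sets of atoms. -/
theorem exists_sb_glue {A B : Set ℕ} (hA : A.Finite) (hB : B.Finite) (hAB : Disjoint A B)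
    (m n : Sb) : ∃ k : Sb, (∀ a ∈ A, k.1 a = m.1 a) ∧ ∀ a ∈ B, k.1 a = n.1 a := by
  classical
  refine ⟨⟨fun a => if a ∈ A then m.1 a else if a ∈ B then n.1 a else a, ?_⟩, ?_, ?_⟩
  · refine (hA.union hB).subset ?_
    intro a ha
    by_contra hn
    simp only [Set.mem_union, not_or] at hn
    apply ha
    simp [hn.1, hn.2]
  · intro a ha
    exact if_pos ha
  · intro a ha
    have hna : a ∉ A := fun h => Set.disjoint_left.1 hAB h ha
    exact (if_neg hna).trans (if_pos ha)

/-! ### Least supports -/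

section
variable {X : Type*} [MulAction Pm X]

theorem Supports.mono {M : Submonoid (Function.End ℕ)} {Y : Type*} [MulAction M Y]
    {C D : Set ℕ} {y : Y} (h : Supports M C y) (hCD : C ⊆ D) : Supports M D y :=
  fun m₁ m₂ hag => h m₁ m₂ fun a ha => hag a (hCD ha)

/-- Finite supports are closed under intersection. Given `g₁`, `g₂` agreeing on `C ∩ D`, let `k`
fix `C` and move `D \ C` to atoms fixed by `g₁` and `g₂`; then `k • x = x` is supported by `k D`,
on which `g₁` and `g₂` agree. -/
theorem Supports.inter {C D : Set ℕ} {x : X} (hC : C.Finite) (hD : D.Finite)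
    (hCx : Supports Pm C x) (hDx : Supports Pm D x) : Supports Pm (C ∩ D) x := by
  intro g₁ g₂ hag
  obtain ⟨k, hk, hk'⟩ := exists_perm_fresh C (hC.union hD) (g₁.2.1.union g₂.2.1)
  have hkx : k • x = x := by
    have := hCx k 1 (fun a ha => hk a (Or.inl ha) ha)
    rwa [one_smul] at this
  have hs := hDx.perm_smul k
  rw [hkx] at hs
  refine hs g₁ g₂ ?_
  rintro _ ⟨a, ha, rfl⟩
  by_cases haC : a ∈ C
  · rw [hk a (Or.inr ha) haC]
    exact hag a ⟨haC, ha⟩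
  · have h := hk' a (Or.inr ha) haC
    simp only [Set.mem_union, Set.mem_ofPred_eq, not_or, not_not] at h
    rw [h.1, h.2]

/-- `C` is the least finite support of `x`. -/
def IsSupp (C : Set ℕ) (x : X) : Prop :=
  C.Finite ∧ Supports Pm C x ∧ ∀ D : Set ℕ, D.Finite → Supports Pm D x → C ⊆ D

theorem exists_least_support (hX : IsNominal Pm X) (x : X) : ∃ C, IsSupp C x := by
  classical
  have hex : ∃ n : ℕ, ∃ C : Set ℕ, C.Finite ∧ Supports Pm C x ∧ C.ncard = n := by
    obtain ⟨C, hC, hs⟩ := hX x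
    exact ⟨_, C, hC, hs, rfl⟩
  obtain ⟨C, hC, hs, hn⟩ := Nat.find_spec hex
  refine ⟨C, hC, hs, fun D hD hDs => ?_⟩
  have hmin : Nat.find hex ≤ (C ∩ D).ncard :=
    Nat.find_min' hex ⟨C ∩ D, hC.inter_of_left D, hs.inter hC hD hDs, rfl⟩
  have : C ∩ D = C := Set.eq_of_subset_of_ncard_le Set.inter_subset_left (hn ▸ hmin) hC
  exact Set.inter_eq_left.1 this

theorem IsSupp.perm_smul {C : Set ℕ} {x : X} (h : IsSupp C x) (g : Pm) :
    IsSupp (g.1 '' C) (g • x) := by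
  refine ⟨h.1.image _, h.2.1.perm_smul g, fun D hD hDs => ?_⟩
  obtain ⟨k, hkg, hgk⟩ := exists_perm_inv g
  have hs := hDs.perm_smul k
  rw [← mul_smul, hkg, one_smul] at hs
  rintro _ ⟨a, ha, rfl⟩
  obtain ⟨b, hb, rfl⟩ := h.2.2 _ (hD.image _) hs ha
  have hb' : g.1 (k.1 b) = b := congrArg (fun p : Pm => p.1 b) hgk
  rwa [hb']

theorem Separated.disjoint {C D : Set ℕ} {x y : X} (h : Separated x y) (hC : IsSupp C x)
    (hD : IsSupp D y) : Disjoint C D := by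
  obtain ⟨C', D', hC', hD', hx, hy, hdis⟩ := h
  exact hdis.mono (hC.2.2 _ hC' hx) (hD.2.2 _ hD' hy)

/-! ### Equality in the free nominal `Sb`-set -/

theorem FElt_act (m : Sb) (g : Pm) (x : X) : FElt m (g • x) = FElt (m * incl g) x :=
  Quot.sound (FGen.act m g x)

theorem FElt_supp {m m' : Sb} {x : X} {C : Set ℕ} (hC : C.Finite) (hs : Supports Pm C x)
    (h : ∀ a ∈ C, m.1 a = m'.1 a) : FElt m x = FElt m' x :=
  Quot.sound (FGen.supp m m' x C hC hs h)

/-- The explicit description of the equivalence `(m, x) ∼ (m', x')`: a permutation `g` carries `x`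
to `x'`, and `m = m' ∘ g` on the least support of `x`. -/
def FRel (p q : Sb × X) : Prop :=
  ∃ g : Pm, g • p.2 = q.2 ∧ ∀ C, IsSupp C p.2 → ∀ a ∈ C, p.1.1 a = q.1.1 (g.1 a)

theorem FRel.symm' {p q : Sb × X} (h : FRel p q) : FRel q p := by
  obtain ⟨m, x⟩ := p
  obtain ⟨m', x'⟩ := q
  obtain ⟨g, rfl, hg⟩ := h
  obtain ⟨k, hkg, hgk⟩ := exists_perm_inv g
  refine ⟨k, by rw [← mul_smul, hkg, one_smul], fun C hC a ha => ?_⟩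
  have hC' := hC.perm_smul k
  rw [← mul_smul, hkg, one_smul] at hC'
  have hb : g.1 (k.1 a) = a := congrArg (fun p : Pm => p.1 a) hgk
  have := hg _ hC' _ ⟨a, ha, rfl⟩
  rw [hb] at this
  exact this.symm

theorem FRel.trans' {p q r : Sb × X} (h : FRel p q) (h' : FRel q r) : FRel p r := by
  obtain ⟨m, x⟩ := p
  obtain ⟨m', x'⟩ := q
  obtain ⟨m'', x''⟩ := r
  obtain ⟨g, rfl, hg⟩ := h
  obtain ⟨k, rfl, hk⟩ := h'
  refine ⟨k * g, mul_smul k g x, fun C hC a ha => ?_⟩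
  exact (hg C hC a ha).trans (hk _ (hC.perm_smul g) _ ⟨a, ha, rfl⟩)

theorem FElt_eq_iff (hX : IsNominal Pm X) {m m' : Sb} {x x' : X} :
    FElt m x = FElt m' x' ↔ FRel (m, x) (m', x') := by
  constructor
  · intro h
    suffices key : ∀ p q : Sb × X, Relation.EqvGen (FGen X) p q → FRel p q from
      key _ _ (Quot.eqvGen_exact h)
    intro p q hpq
    induction hpq with
    | rel p q hpq =>
      cases hpq with
      | act m g x =>
        exact FRel.symm' ⟨g, rfl, fun C _ a _ => rfl⟩
      | supp m m' x C hC hs hag =>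
        exact ⟨1, one_smul _ _, fun D hD a ha => hag a (hD.2.2 C hC hs ha)⟩
    | refl p => exact ⟨1, one_smul _ _, fun D hD a ha => rfl⟩
    | symm p q _ ih => exact ih.symm'
    | trans p q r _ _ ih ih' => exact ih.trans' ih'
  · rintro ⟨g, hgx, hg⟩
    obtain ⟨C, hC⟩ := exists_least_support hX x
    simp only at hgx
    rw [← hgx, FElt_act]
    exact FElt_supp hC.1 hC.2.1 (hg C hC)

/-! ### The comparison map -/

theorem SepW.smul_val (g : Pm) (w : SepW X) : (g • w).1 = w.1.map (g • ·) := rfl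

theorem Supports.of_mem {C : Set ℕ} {w : SepW X} (h : Supports Pm C w) {x : X} (hx : x ∈ w.1) :
    Supports Pm C x := by
  intro g₁ g₂ hag
  have := congrArg Subtype.val (h g₁ g₂ hag)
  rw [SepW.smul_val, SepW.smul_val] at this
  exact List.map_inj_left.1 this x hx

theorem Supports.of_forall_mem {C : Set ℕ} {w : SepW X} (h : ∀ x ∈ w.1, Supports Pm C x) :
    Supports Pm C w := by
  intro g₁ g₂ hag
  apply Subtype.ext
  rw [SepW.smul_val, SepW.smul_val]
  exact List.map_inj_left.2 fun x hx => h x hx g₁ g₂ hag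

/-- The comparison map `[m, x₁ ⋯ xₙ] ↦ [m, x₁] ⋯ [m, xₙ]`. -/
def wordMap : FObj (SepW X) → List (FObj X) :=
  Quot.lift (fun p => p.2.1.map (FElt p.1)) (by
    intro p q h
    cases h with
    | act m g w =>
      show (g • w).1.map (FElt m) = w.1.map (FElt (m * incl g))
      rw [SepW.smul_val, List.map_map]
      exact List.map_congr_left fun x _ => FElt_act m g x
    | supp m m' w C hC hs hag =>
      exact List.map_congr_left fun x hx => FElt_supp hC (hs.of_mem hx) hag)

/-- Every word over `F(X)` lifts to a separated word. The finite set `D` supporting all letters is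
carried along so that the next letter can be renamed away from it. -/
theorem exists_sepWord (hX : IsNominal Pm X) (l : List (FObj X)) :
    ∃ (m : Sb) (w : List X) (D : Set ℕ), w.Pairwise Separated ∧ D.Finite ∧
      (∀ x ∈ w, Supports Pm D x) ∧ w.map (FElt m) = l := by
  induction l with
  | nil => exact ⟨1, [], ∅, List.Pairwise.nil, Set.finite_empty, by simp, rfl⟩
  | cons y l ih =>
    obtain ⟨m, w, D, hw, hD, hs, rfl⟩ := ih
    induction y using Quot.ind with
    | _ p =>
      obtain ⟨n, x⟩ := p
      obtain ⟨C, hC, hCx⟩ := hX x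
      obtain ⟨g, -, hg⟩ := exists_perm_fresh ∅ hC hD
      obtain ⟨k, hkg, -⟩ := exists_perm_inv g
      have hdis : Disjoint (g.1 '' C) D := by
        rw [Set.disjoint_left]
        rintro _ ⟨a, ha, rfl⟩
        exact hg a ha (Set.notMem_empty a)
      obtain ⟨m', h1, h2⟩ := exists_sb_glue (hC.image g.1) hD hdis (n * incl k) m
      have hgx := hCx.perm_smul g
      refine ⟨m', (g • x) :: w, g.1 '' C ∪ D, ?_, (hC.image _).union hD, ?_, ?_⟩
      · exact List.pairwise_cons.2
          ⟨fun y hy => ⟨_, D, hC.image _, hD, hgx, hs y hy, hdis⟩, hw⟩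
      · intro y hy
        rcases List.mem_cons.1 hy with rfl | hy
        · exact hgx.mono Set.subset_union_left
        · exact (hs y hy).mono Set.subset_union_right
      · rw [List.map_cons]
        congr 1
        · rw [FElt_supp (hC.image _) hgx h1, ← FElt_act, ← mul_smul, hkg, one_smul]
          rfl
        · exact List.map_congr_left fun y hy => FElt_supp hD (hs y hy) h2

/-- Separated words with letterwise equal classes are related by a single permutation. The set `D`
is the union of the least supports of the letters of `w`; its image under the permutation is
covered by the least supports of the letters of `w'`, hence is disjoint from the support of
any further letter separated from `w'`. -/
theorem exists_common_perm (hX : IsNominal Pm X) {m m' : Sb} (w w' : List X)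
    (hw : w.Pairwise Separated) (hw' : w'.Pairwise Separated)
    (h : w.map (FElt m) = w'.map (FElt m')) :
    ∃ (g : Pm) (D : Set ℕ), D.Finite ∧ (∀ x ∈ w, Supports Pm D x) ∧
      (∀ a ∈ D, ∃ x ∈ w, ∃ C, IsSupp C x ∧ a ∈ C) ∧
      w.map (g • ·) = w' ∧ ∀ a ∈ D, m.1 a = m'.1 (g.1 a) := by
  classical
  induction w generalizing w' with
  | nil =>
    have : w' = [] := by simpa using h.symm
    subst this
    exact ⟨1, ∅, Set.finite_empty, by simp, by simp, rfl, by simp⟩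
  | cons x w ih =>
    cases w' with
    | nil => simp at h
    | cons x' w' =>
      rw [List.map_cons, List.map_cons, List.cons.injEq] at h
      rw [List.pairwise_cons] at hw hw'
      obtain ⟨g₁, D, hD, hDs, hDc, rfl, hDm⟩ := ih w' hw.2 hw'.2 h.2
      obtain ⟨g₀, hg₀, hm₀⟩ := (FElt_eq_iff hX).1 h.1
      simp only at hg₀
      subst hg₀
      obtain ⟨C, hC⟩ := exists_least_support hX x
      have hm₀ := hm₀ C hC
      have hCD : ∀ a ∈ C, a ∉ D := by
        intro a ha haD
        obtain ⟨y, hy, E, hE, haE⟩ := hDc a haD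
        exact Set.disjoint_left.1 ((hw.1 y hy).disjoint hC hE) ha haE
      have himg : ∀ a ∈ C, ∀ b ∈ D, g₀.1 a ≠ g₁.1 b := by
        intro a ha b hb hab
        obtain ⟨y, hy, E, hE, hbE⟩ := hDc b hb
        have hsep := hw'.1 (g₁ • y) (List.mem_map.2 ⟨y, hy, rfl⟩)
        exact Set.disjoint_left.1 (hsep.disjoint (hC.perm_smul g₀) (hE.perm_smul g₁))
          ⟨a, ha, rfl⟩ ⟨b, hbE, hab.symm⟩
      obtain ⟨g, hg⟩ := exists_perm_extend (hC.1.union hD)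
        (f := fun a => if a ∈ C then g₀.1 a else g₁.1 a) (by
          intro a ha b hb hab
          simp only at hab
          split_ifs at hab with h1 h2 h2
          · exact g₀.2.2.injective hab
          · exact absurd hab (himg a h1 b (hb.resolve_left h2))
          · exact absurd hab.symm (himg b h2 a (ha.resolve_left h1))
          · exact g₁.2.2.injective hab)
      have hgC : ∀ a ∈ C, g.1 a = g₀.1 a := fun a ha => by rw [hg a (Or.inl ha), if_pos ha]
      have hgD : ∀ a ∈ D, g.1 a = g₁.1 a := fun a ha => by
        rw [hg a (Or.inr ha), if_neg fun h => hCD a h ha]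
      refine ⟨g, C ∪ D, hC.1.union hD, ?_, ?_, ?_, ?_⟩
      · intro y hy
        rcases List.mem_cons.1 hy with rfl | hy
        · exact hC.2.1.mono Set.subset_union_left
        · exact (hDs y hy).mono Set.subset_union_right
      · rintro a (ha | ha)
        · exact ⟨x, by simp, C, hC, ha⟩
        · obtain ⟨y, hy, hE⟩ := hDc a ha
          exact ⟨y, List.mem_cons_of_mem _ hy, hE⟩
      · rw [List.map_cons]
        congr 1
        · exact hC.2.1 g g₀ hgC
        · exact List.map_congr_left fun y hy => hDs y hy g g₁ hgD
      · rintro a (ha | ha)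
        · rw [hgC a ha]
          exact hm₀ a ha
        · rw [hgD a ha]
          exact hDm a ha

end

/-- For every nominal `Perm`-set `X` there is an isomorphism of nominal
`Sb`-sets `F(X^(∗)) ≅ (F X)^∗` between `F` applied to the separated words over `X` and
the `Sb`-set of all words over `F(X)` (with letterwise action). -/
theorem FObj_sepWords_iso_words {X : Type*} [MulAction Pm X] (hX : IsNominal Pm X) :
    ∃ e : FObj (SepW X) → List (FObj X),
      Function.Bijective e ∧ Equivariant Sb e := by
  refine ⟨wordMap, ⟨?_, ?_⟩, ?_⟩
  · intro p q hpq
    induction p using Quot.ind with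
    | _ p =>
    induction q using Quot.ind with
    | _ q =>
    obtain ⟨m, w⟩ := p
    obtain ⟨m', w'⟩ := q
    obtain ⟨g, D, hD, hDs, -, hgw, hDm⟩ := exists_common_perm hX w.1 w'.1 w.2 w'.2 hpq
    have hw' : w' = g • w := Subtype.ext hgw.symm
    show FElt m w = FElt m' w'
    rw [hw', FElt_act]
    exact FElt_supp hD (Supports.of_forall_mem hDs) hDm
  · intro l
    obtain ⟨m, w, -, hw, -, -, hl⟩ := exists_sepWord hX l
    exact ⟨FElt m ⟨w, hw⟩, hl⟩
  · intro n p
    induction p using Quot.ind with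
    | _ p =>
    obtain ⟨m, w⟩ := p
    show w.1.map (FElt (n * m)) = (w.1.map (FElt m)).map (n • ·)
    rw [List.map_map]
    rfl
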